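/- Proposition 4.1 (correlation-kernel form of the eigenvalue density for the product of truncated unitary matrices and a shifted Ginibre matrix, residue form). Assume a₁,…,a_N > 0 are pairwise distinct, let ξ_j(y) := ∏_{l=1}^r Γ(μ_l−ν_l) · Φ^{(μ)}(−a_j;y), g_{ij} := ∫₀^∞ x^{i−1} ξ_j(x) dx for 1 ≤ i,j ≤ N, assume det[g_{ij}] ≠ 0, and set Z_N := N!·det[g_{ij}]. Define K_N(x,y) := ∫₀^∞ u^{ν₀} e^{−u} Ψ^{(μ)}(u;x) · ( ∑_{j=1}^N Φ^{(μ)}(−a_j;y) e^{−a_j} ∏_{l≠j} ((−u−a_l)/(a_j−a_l)) ) du for x,y > 0. Then for all (x₁,…,x_N) ∈ (0,∞)^N, (1/Z_N)·det[x_j^{i−1}]_{i,j=1}^N · det[ξ_i(x_j)]_{i,j=1}^N = (1/N!)·det[K_N(x_i,x_j)]_{i,j=1}^N. -/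

import Mathlib

open MeasureTheory Filter Topology

noncomputable section


/-- Pochhammer symbol `(a)_j` over `ℝ`. -/
def poch (a : ℝ) (j : ℕ) : ℝ := ∏ i ∈ Finset.range j, (a + i)

/-- The hypergeometric function `₀F₁(b; z)` for complex argument `z`. -/
def hyp0F1 (b : ℝ) (z : ℂ) : ℂ :=
  ∑' k : ℕ, (Real.Gamma b : ℂ) * z ^ k /
    ((Nat.factorial k : ℂ) * (Real.Gamma (b + k) : ℂ))

/-- The hypergeometric function `₀F₁(b; z)` for real argument `z`. -/
def hyp0F1R (b z : ℝ) : ℝ :=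
  ∑' k : ℕ, Real.Gamma b * z ^ k / (Nat.factorial k * Real.Gamma (b + k))

/-- The terminating hypergeometric sum `₁F₁(-k; b; u)`. -/
def hyp1F1T (k : ℕ) (b u : ℝ) : ℝ :=
  ∑ j ∈ Finset.range (k + 1),
    poch (-(k : ℝ)) j / (poch b j * Nat.factorial j) * u ^ j

/-- The function `Ψ(u;x)` of the paper. -/
def Psi (r ν0 : ℕ) (ν : Fin r → ℕ) (u x : ℝ) : ℝ :=
  (1 / Real.Gamma ((ν0 : ℝ) + 1)) *
    ∑' k : ℕ, x ^ k / Nat.factorial k * hyp1F1T k ((ν0 : ℝ) + 1) u *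
      ∏ l, 1 / Real.Gamma ((ν l : ℝ) + 1 + k)

/-- The positive orthant in `ℝ^r`. -/
def posOrth (r : ℕ) : Set (Fin r → ℝ) := {t | ∀ i, 0 < t i}

/-- The function `Φ(v;y)` of the paper, complex `v`. -/
def Phi (r ν0 : ℕ) (ν : Fin r → ℕ) (v : ℂ) (y : ℝ) : ℂ :=
  ((1 / Real.Gamma ((ν0 : ℝ) + 1) : ℝ) : ℂ) *
    ∫ t in posOrth r,
      (((∏ i, (t i) ^ ((ν i : ℝ) - 1) * Real.exp (-t i)) *
          (y / ∏ i, t i) ^ ν0 * Real.exp (-(y / ∏ i, t i)) : ℝ) : ℂ) *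
        hyp0F1 ((ν0 : ℝ) + 1) (-(v * ((y / ∏ i, t i : ℝ) : ℂ)))

/-- The function `Φ(v;y)` of the paper, real `v`. -/
def PhiR (r ν0 : ℕ) (ν : Fin r → ℕ) (v y : ℝ) : ℝ :=
  (1 / Real.Gamma ((ν0 : ℝ) + 1)) *
    ∫ t in posOrth r,
      ((∏ i, (t i) ^ ((ν i : ℝ) - 1) * Real.exp (-t i)) *
          (y / ∏ i, t i) ^ ν0 * Real.exp (-(y / ∏ i, t i))) *
        hyp0F1R ((ν0 : ℝ) + 1) (-(v * (y / ∏ i, t i)))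

/-- The double-contour-integral correlation kernel `K_N(x,y)` of Proposition 2.1,
with `C` the counterclockwise circle of center `c` and radius `R`. -/
def KN (r ν0 N : ℕ) (ν : Fin r → ℕ) (a : Fin N → ℝ) (c : ℂ) (R : ℝ) (x y : ℝ) : ℂ :=
  ∫ u in Set.Ioi (0 : ℝ),
    (2 * Real.pi * Complex.I)⁻¹ *
      ∮ v in C(c, R),
        (u : ℂ) ^ ν0 * Complex.exp (-(u : ℂ) + v) * ((Psi r ν0 ν u x : ℝ) : ℂ) *
          Phi r ν0 ν v y * ((u : ℂ) - v)⁻¹ * ∏ l, ((u : ℂ) + (a l : ℂ)) / (v + (a l : ℂ))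

/-- An admissible contour for `K_N`: a counterclockwise circle contained in the left
half-plane which encloses all the points `-a l`. -/
def AdmCircle (N : ℕ) (a : Fin N → ℝ) (c : ℂ) (R : ℝ) : Prop :=
  0 < R ∧ c.re + R < 0 ∧ ∀ l, ‖-(a l : ℂ) - c‖ < R

/-- The Meijer G-function `G^{1,0}_{0,r+2}(—;0,-ν₀,…,-ν_r | z)`, complex argument. -/
def G1 (r ν0 : ℕ) (ν : Fin r → ℕ) (z : ℂ) : ℂ :=
  ∑' k : ℕ, (-z) ^ k /
    ((Nat.factorial k : ℂ) * (Real.Gamma ((ν0 : ℝ) + 1 + k) : ℂ) *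
      ∏ l, (Real.Gamma ((ν l : ℝ) + 1 + k) : ℂ))

/-- The Meijer G-function `G^{1,0}_{0,r+2}(—;0,-ν₀,…,-ν_r | z)`, real argument. -/
def G1R (r ν0 : ℕ) (ν : Fin r → ℕ) (z : ℝ) : ℝ :=
  ∑' k : ℕ, (-z) ^ k /
    (Nat.factorial k * Real.Gamma ((ν0 : ℝ) + 1 + k) *
      ∏ l, Real.Gamma ((ν l : ℝ) + 1 + k))

/-- `g₀(w) = ∑ (-1)^k w^{ν₀+k}/(k! Γ(ν₀+k+1))`, complex argument. -/
def g0C (ν0 : ℕ) (w : ℂ) : ℂ :=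
  ∑' k : ℕ, (-1 : ℂ) ^ k * w ^ (ν0 + k) /
    ((Nat.factorial k : ℂ) * (Real.Gamma ((ν0 : ℝ) + k + 1) : ℂ))

/-- `g₀(w)`, real argument. -/
def g0R (ν0 : ℕ) (w : ℝ) : ℝ :=
  ∑' k : ℕ, (-1 : ℝ) ^ k * w ^ (ν0 + k) /
    (Nat.factorial k * Real.Gamma ((ν0 : ℝ) + k + 1))

/-- The Meijer G-function `G^{r+1,0}_{0,r+2}(—;ν₀,…,ν_r,0 | z)` for `z > 0`, real form. -/
def G2R (r ν0 : ℕ) (ν : Fin r → ℕ) (z : ℝ) : ℝ :=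
  ∫ t in posOrth r,
    (∏ l, (t l) ^ ((ν l : ℝ) - 1) * Real.exp (-t l)) * g0R ν0 (z / ∏ l, t l)

/-- The critical hard-edge kernel `𝒦^{h,r}(ξ,η;τ)` of Theorem 1.2, the inner integral
running up the imaginary axis `v = i t`. -/
def Kcrit (r ν0 : ℕ) (ν : Fin r → ℕ) (G2 : ℂ → ℂ) (τ ξ η : ℝ) : ℂ :=
  (2 * Real.pi * Complex.I)⁻¹ *
    ∫ u in Set.Ioi (0 : ℝ), ∫ t : ℝ,
      ((u : ℂ) / (Complex.I * t)) ^ ν0 *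
        Complex.exp (-(τ : ℂ) * u - (u : ℂ) ^ 2 / 2 + (τ : ℂ) * (Complex.I * t) +
          (Complex.I * t) ^ 2 / 2) *
        ((u : ℂ) - Complex.I * t)⁻¹ * G1 r ν0 ν ((u * ξ : ℝ) : ℂ) *
        G2 (Complex.I * t * (η : ℂ)) * Complex.I

/-- The deformed critical kernel `𝒦^{h,r}_m(ξ,η;τ,σ)` of Theorem 1.3, the inner integral
running up the vertical line `Re v = -c`. -/
def KcritLine (r ν0 m : ℕ) (ν : Fin r → ℕ) (σ : ℕ → ℝ) (G2 : ℂ → ℂ) (c τ ξ η : ℝ) : ℂ :=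
  (2 * Real.pi * Complex.I)⁻¹ *
    ∫ u in Set.Ioi (0 : ℝ), ∫ t : ℝ,
      ((u : ℂ) / (-(c : ℂ) + Complex.I * t)) ^ ν0 *
        Complex.exp (-(τ : ℂ) * u - (u : ℂ) ^ 2 / 2 +
          (τ : ℂ) * (-(c : ℂ) + Complex.I * t) + (-(c : ℂ) + Complex.I * t) ^ 2 / 2) *
        ((u : ℂ) - (-(c : ℂ) + Complex.I * t))⁻¹ *
        (∏ j ∈ Finset.range m,
          ((u : ℂ) + (σ j : ℂ)) / ((-(c : ℂ) + Complex.I * t) + (σ j : ℂ))) *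
        G1 r ν0 ν ((u * ξ : ℝ) : ℂ) * G2 ((-(c : ℂ) + Complex.I * t) * (η : ℂ)) * Complex.I




/-- `Ψ(u;x)` in the case `r = 0`. -/
def Psi0 (ν0 : ℕ) (u x : ℝ) : ℝ :=
  Real.exp x * hyp0F1R ((ν0 : ℝ) + 1) (-(u * x)) / Real.Gamma ((ν0 : ℝ) + 1)

/-- `Φ(v;y)` in the case `r = 0`, complex `v`. -/
def Phi0 (ν0 : ℕ) (v : ℂ) (y : ℝ) : ℂ :=
  ((y ^ ν0 * Real.exp (-y) / Real.Gamma ((ν0 : ℝ) + 1) : ℝ) : ℂ) *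
    hyp0F1 ((ν0 : ℝ) + 1) (-(v * (y : ℂ)))

/-- The kernel `K_N` in the case `r = 0`. -/
def KN0 (ν0 N : ℕ) (a : Fin N → ℝ) (c : ℂ) (R : ℝ) (x y : ℝ) : ℂ :=
  ∫ u in Set.Ioi (0 : ℝ),
    (2 * Real.pi * Complex.I)⁻¹ *
      ∮ v in C(c, R),
        (u : ℂ) ^ ν0 * Complex.exp (-(u : ℂ) + v) * ((Psi0 ν0 u x : ℝ) : ℂ) *
          Phi0 ν0 v y * ((u : ℂ) - v)⁻¹ * ∏ l, ((u : ℂ) + (a l : ℂ)) / (v + (a l : ℂ))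

/-- Laguerre polynomial `L_n^{ν}(x)`. -/
def laguerreL (n νp : ℕ) (x : ℝ) : ℝ :=
  ∑ k ∈ Finset.range (n + 1),
    (-1 : ℝ) ^ k * (Nat.choose (n + νp) (n - k)) * x ^ k / Nat.factorial k

/-- The function `Ψ^{(μ)}(u;x)` of Section 4. -/
def PsiMu (r ν0 : ℕ) (μ ν : Fin r → ℕ) (u x : ℝ) : ℝ :=
  (1 / Real.Gamma ((ν0 : ℝ) + 1)) *
    ∑' k : ℕ, x ^ k / Nat.factorial k * hyp1F1T k ((ν0 : ℝ) + 1) u *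
      ∏ l, Real.Gamma ((μ l : ℝ) + 1 + k) / Real.Gamma ((ν l : ℝ) + 1 + k)

/-- The open unit cube in `ℝ^r`. -/
def unitCube (r : ℕ) : Set (Fin r → ℝ) := {t | ∀ i, 0 < t i ∧ t i < 1}

/-- The function `Φ^{(μ)}(v;y)` of Section 4, complex `v`. -/
def PhiMu (r ν0 : ℕ) (μ ν : Fin r → ℕ) (v : ℂ) (y : ℝ) : ℂ :=
  ((1 / (Real.Gamma ((ν0 : ℝ) + 1) * ∏ l, Real.Gamma ((μ l : ℝ) - (ν l : ℝ))) : ℝ) : ℂ) *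
    ∫ t in unitCube r,
      (((∏ l, (t l) ^ ((ν l : ℝ) - 1) * (1 - t l) ^ ((μ l : ℝ) - (ν l : ℝ) - 1)) *
          (y / ∏ l, t l) ^ ν0 * Real.exp (-(y / ∏ l, t l)) : ℝ) : ℂ) *
        hyp0F1 ((ν0 : ℝ) + 1) (-(v * ((y / ∏ l, t l : ℝ) : ℂ)))

/-- The function `Φ^{(μ)}(v;y)` of Section 4, real `v`. -/
def PhiMuR (r ν0 : ℕ) (μ ν : Fin r → ℕ) (v y : ℝ) : ℝ :=
  (1 / (Real.Gamma ((ν0 : ℝ) + 1) * ∏ l, Real.Gamma ((μ l : ℝ) - (ν l : ℝ)))) *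
    ∫ t in unitCube r,
      ((∏ l, (t l) ^ ((ν l : ℝ) - 1) * (1 - t l) ^ ((μ l : ℝ) - (ν l : ℝ) - 1)) *
          (y / ∏ l, t l) ^ ν0 * Real.exp (-(y / ∏ l, t l))) *
        hyp0F1R ((ν0 : ℝ) + 1) (-(v * (y / ∏ l, t l)))

/-- The kernel `K_N` for the truncated-unitary product of Section 4. -/
def KNmu (r ν0 N : ℕ) (μ ν : Fin r → ℕ) (a : Fin N → ℝ) (c : ℂ) (R : ℝ) (x y : ℝ) : ℂ :=
  ∫ u in Set.Ioi (0 : ℝ),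
    (2 * Real.pi * Complex.I)⁻¹ *
      ∮ v in C(c, R),
        (u : ℂ) ^ ν0 * Complex.exp (-(u : ℂ) + v) * ((PsiMu r ν0 μ ν u x : ℝ) : ℂ) *
          PhiMu r ν0 μ ν v y * ((u : ℂ) - v)⁻¹ * ∏ l, ((u : ℂ) + (a l : ℂ)) / (v + (a l : ℂ))

/-- Mixed domain `(0,1)^q × (0,∞)^{r-q}`. -/
def mixedSet (r q : ℕ) : Set (Fin r → ℝ) := {t | ∀ l, 0 < t l ∧ ((l : ℕ) < q → t l < 1)}

/-- The Meijer G-function `G^{1,q}_{q,r+2}(-μ₁,…,-μ_q; 0,-ν₀,…,-ν_r | z)`, real form. -/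
def G1qR (r ν0 q : ℕ) (μ ν : Fin r → ℕ) (z : ℝ) : ℝ :=
  ∑' k : ℕ, (-z) ^ k *
    (∏ l ∈ Finset.univ.filter fun l : Fin r => (l : ℕ) < q, Real.Gamma ((μ l : ℝ) + 1 + k)) /
    (Nat.factorial k * Real.Gamma ((ν0 : ℝ) + 1 + k) *
      ∏ l, Real.Gamma ((ν l : ℝ) + 1 + k))

/-- The Meijer G-function `G^{1,q}_{q,r+2}(-μ₁,…,-μ_q; 0,-ν₀,…,-ν_r | z)`, complex form. -/
def G1q (r ν0 q : ℕ) (μ ν : Fin r → ℕ) (z : ℂ) : ℂ :=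
  ∑' k : ℕ, (-z) ^ k *
    ((∏ l ∈ Finset.univ.filter fun l : Fin r => (l : ℕ) < q,
      Real.Gamma ((μ l : ℝ) + 1 + k) : ℝ) : ℂ) /
    ((Nat.factorial k : ℂ) * (Real.Gamma ((ν0 : ℝ) + 1 + k) : ℂ) *
      ∏ l, (Real.Gamma ((ν l : ℝ) + 1 + k) : ℂ))

/-- The Meijer G-function `G^{r+1,0}_{q,r+2}(μ₁,…,μ_q; ν₀,…,ν_r,0 | z)` for `z > 0`. -/
def G2qR (r ν0 q : ℕ) (μ ν : Fin r → ℕ) (z : ℝ) : ℝ :=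
  ∫ t in mixedSet r q,
    (∏ l : Fin r, if l.val < q then
        (t l) ^ ((ν l : ℝ) - 1) * (1 - t l) ^ ((μ l : ℝ) - (ν l : ℝ) - 1) /
          Real.Gamma ((μ l : ℝ) - (ν l : ℝ))
      else (t l) ^ ((ν l : ℝ) - 1) * Real.exp (-t l)) *
      g0R ν0 (z / ∏ l, t l)

/-!
The moments of `ξ_j` factor through a multiplicative convolution: the beta variables contribute
`∏ₗ Γ(νₗ + 1 + i) / Γ(μₗ + 1 + i)`, and the noncentral gamma weight contributes
`i! exp(a_j) L_i(-a_j)`, a Laguerre polynomial at `-a_j`. The Laguerre coefficients of `Ψ` carry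
exactly the reciprocal Gamma quotients. Hence integrating `Ψ(u; x)` against a polynomial `q(u)` of
degree less than `N` gives a polynomial in `x` whose integral against `ξ_j` is, up to a constant,
`exp(a_j) q(-a_j)`: this is the Laguerre expansion of `q` evaluated at `-a_j`. Taking for `q` the
Lagrange basis at the nodes `-a_j`, scaled by `exp(-a_j)`, produces the polynomials dual to the
`ξ_j`. Their coefficient matrix is `g⁻¹`, so the kernel matrix is `Vᵀ (g⁻¹)ᵀ Ξ`, with
`V = (x_j ^ (i - 1))` and `Ξ = (ξ_i(x_j))`, and its determinant is `det V * det Ξ / det g`.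
-/

section Laguerre

open Finset Polynomial
open scoped Nat

lemma Gamma_natCast_add_one_add (n k : ℕ) : Real.Gamma ((n : ℝ) + 1 + k) = ((n + k)! : ℝ) := by
  rw [← Real.Gamma_nat_eq_factorial]
  push_cast
  ring_nf

lemma factorial_add_div_factorial (n s : ℕ) :
    ((n + s)! : ℝ) / n ! = s ! * ((n + s).choose s : ℝ) := by
  rw [← Nat.choose_symm_add, Nat.cast_add_choose]
  field_simp

/-- The generalised Laguerre polynomial `L_k^{(v)}` as an element of `ℝ[X]`; its evaluation is the
function `laguerreL k v`. -/
def laguerrePoly (v k : ℕ) : ℝ[X] :=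
  ∑ j ∈ range (k + 1), C ((-1) ^ j * ((k + v).choose (k - j) : ℝ) / j !) * X ^ j

lemma eval_laguerrePoly (v k : ℕ) (x : ℝ) : (laguerrePoly v k).eval x = laguerreL k v x := by
  simp only [laguerrePoly, laguerreL, eval_finsetSum, eval_mul, eval_C, eval_pow, eval_X]
  exact sum_congr rfl fun j _ => by ring

lemma coeff_laguerrePoly (v k j : ℕ) :
    (laguerrePoly v k).coeff j =
      if j ≤ k then (-1) ^ j * ((k + v).choose (k - j) : ℝ) / j ! else 0 := by
  simp [laguerrePoly, finsetSum_coeff, coeff_C_mul, coeff_X_pow]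

lemma natDegree_laguerrePoly_le (v k : ℕ) : (laguerrePoly v k).natDegree ≤ k :=
  natDegree_le_iff_coeff_eq_zero.2 fun _ hj => by
    rw [coeff_laguerrePoly, if_neg (by lia)]

lemma choose_add_sub_div_factorial {k j : ℕ} (v : ℕ) (hj : j ≤ k) :
    ((k + v).choose (k - j) : ℝ) / j ! = (v + k)! / k ! * (k.choose j / (v + j)!) := by
  rw [Nat.cast_choose ℝ hj, Nat.cast_choose ℝ (by lia : k - j ≤ k + v),
    show k + v - (k - j) = v + j by lia, add_comm k v]
  field_simp

lemma poch_eq_eval_ascPochhammer (a : ℝ) (j : ℕ) : poch a j = (ascPochhammer ℝ j).eval a := by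
  induction j with
  | zero => simp [poch]
  | succ j ih => rw [poch, prod_range_succ, ← poch, ih, ascPochhammer_succ_eval]

lemma poch_neg_natCast (k j : ℕ) : poch (-(k : ℝ)) j = (-1) ^ j * (j ! * (k.choose j : ℝ)) := by
  rw [poch_eq_eval_ascPochhammer, ascPochhammer_eval_neg_eq_descPochhammer,
    descPochhammer_eval_eq_descFactorial, Nat.descFactorial_eq_factorial_mul_choose, Nat.cast_mul]

lemma poch_natCast_add_one (v j : ℕ) : poch ((v : ℝ) + 1) j = (v + j)! / v ! := by
  rw [poch_eq_eval_ascPochhammer, eq_div_iff (by positivity), mul_comm]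
  exact_mod_cast factorial_mul_ascPochhammer ℝ v j

lemma hyp1F1T_natCast_add_one (v k : ℕ) (u : ℝ) :
    hyp1F1T k ((v : ℝ) + 1) u = k ! * v ! / (v + k)! * laguerreL k v u := by
  rw [hyp1F1T, laguerreL, mul_sum]
  refine sum_congr rfl fun j hj => ?_
  have h := choose_add_sub_div_factorial v (Nat.lt_succ_iff.1 (mem_range.1 hj))
  rw [div_eq_iff (by positivity)] at h
  rw [poch_neg_natCast, poch_natCast_add_one, h]
  field_simp

lemma integrableOn_pow_mul_exp_neg_mul (n : ℕ) {b : ℝ} (hb : 0 < b) :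
    IntegrableOn (fun u : ℝ => u ^ n * Real.exp (-(b * u))) (Set.Ioi 0) := by
  simpa using integrableOn_rpow_mul_exp_neg_mul_rpow (s := n) (p := 1)
    (by linarith [n.cast_nonneg (α := ℝ)]) one_pos hb

lemma integral_pow_mul_exp_neg (n : ℕ) :
    ∫ u in Set.Ioi (0 : ℝ), u ^ n * Real.exp (-u) = n ! := by
  rw [← Real.Gamma_nat_eq_factorial, Real.Gamma_eq_integral (by positivity)]
  simp [mul_comm]

lemma integrableOn_pow_mul_exp_neg_mul_mul_eval (n : ℕ) {b : ℝ} (hb : 0 < b) (p : ℝ[X]) :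
    IntegrableOn (fun u : ℝ => u ^ n * Real.exp (-(b * u)) * p.eval u) (Set.Ioi 0) := by
  induction p using Polynomial.induction_on' with
  | add p q hp hq =>
    simp only [eval_add, mul_add]
    exact hp.add hq
  | monomial m c =>
    have h (u : ℝ) : u ^ n * Real.exp (-(b * u)) * (monomial m c).eval u =
        c * (u ^ (n + m) * Real.exp (-(b * u))) := by
      rw [eval_monomial, pow_add]
      ring
    simp only [h]
    exact (integrableOn_pow_mul_exp_neg_mul (n + m) hb).const_mul c

/-- Integration of polynomials against the Laguerre weight `u ^ v * exp (-u)` on `(0, ∞)`, the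
functional for which the polynomials `laguerrePoly v k` are orthogonal. -/
def laguerreIntegral (v : ℕ) : ℝ[X] →ₗ[ℝ] ℝ where
  toFun p := ∫ u in Set.Ioi (0 : ℝ), u ^ v * Real.exp (-u) * p.eval u
  map_add' p q := by
    have h (p : ℝ[X]) := integrableOn_pow_mul_exp_neg_mul_mul_eval v one_pos p
    simp only [one_mul] at h
    simp only [eval_add, mul_add]
    exact integral_add (h p) (h q)
  map_smul' c p := by
    simp only [eval_smul, smul_eq_mul, mul_left_comm _ c, RingHom.id_apply]
    exact integral_const_mul c _

lemma laguerreIntegral_apply (v : ℕ) (p : ℝ[X]) :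
    laguerreIntegral v p = ∫ u in Set.Ioi (0 : ℝ), u ^ v * Real.exp (-u) * p.eval u := rfl

lemma laguerreIntegral_X_pow (v m : ℕ) : laguerreIntegral v (X ^ m) = (v + m)! := by
  simp only [laguerreIntegral_apply, eval_pow, eval_X, ← integral_pow_mul_exp_neg, pow_add,
    mul_right_comm]

lemma fwdDiff_iter_choose_of_le {k m : ℕ} (hm : m ≤ k) (A : ℕ) :
    (fwdDiff 1)^[k] (fun x : ℕ => (x.choose m : ℤ)) A = if m = k then 1 else 0 := by
  have hconst : (fwdDiff 1)^[m] (fun x : ℕ => (x.choose m : ℤ)) = fun _ => 1 := by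
    simpa using fwdDiff_iter_choose 0 m
  obtain rfl | hlt := hm.eq_or_lt
  · rw [hconst, if_pos rfl]
  · obtain ⟨d, rfl⟩ := Nat.exists_eq_add_of_lt hlt
    rw [show m + d + 1 = d + 1 + m by ring, Function.iterate_add_apply, hconst,
      Function.iterate_succ_apply, fwdDiff_const, if_neg (by lia)]
    simp [fwdDiff_iter_eq_sum_shift]

/- The `k`-th forward difference of a polynomial of degree at most `k` sees only its leading
coefficient; the orthogonality of the Laguerre polynomials reduces to this. -/
lemma sum_neg_one_pow_mul_choose_mul_choose {k m : ℕ} (A : ℕ) (hm : m ≤ k) :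
    ∑ j ∈ range (k + 1), (-1 : ℝ) ^ j * k.choose j * (A + j).choose m =
      if m = k then (-1) ^ k else 0 := by
  have h := congrArg (fun z : ℤ => (-1 : ℝ) ^ k * z)
    ((fwdDiff_iter_eq_sum_shift 1 _ k A).symm.trans (fwdDiff_iter_choose_of_le hm A))
  push_cast [smul_eq_mul, mul_sum, mul_ite, mul_one, mul_zero] at h
  rw [← h]
  refine sum_congr rfl fun j hj => ?_
  obtain ⟨d, rfl⟩ := Nat.exists_eq_add_of_le (Nat.lt_succ_iff.1 (mem_range.1 hj))
  have hd : (-1 : ℝ) ^ d * (-1) ^ d = 1 := by rw [← mul_pow]; norm_num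
  rw [Nat.add_sub_cancel_left, pow_add]
  linear_combination (-(-1) ^ j * (j + d).choose j * (A + j).choose m : ℝ) * hd

lemma laguerreIntegral_laguerrePoly_mul_X_pow {v k m : ℕ} (hm : m ≤ k) :
    laguerreIntegral v (laguerrePoly v k * X ^ m) =
      if m = k then (-1) ^ k * ((v + k)! : ℝ) else 0 := by
  have hterm : ∀ j ∈ range (k + 1),
      (-1 : ℝ) ^ j * (k + v).choose (k - j) / j ! * (v + (j + m))! =
        (v + k)! * m ! / k ! * ((-1) ^ j * k.choose j * (v + m + j).choose m) := by
    intro j hj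
    have h := factorial_add_div_factorial (v + j) m
    rw [mul_div_assoc, choose_add_sub_div_factorial v (Nat.lt_succ_iff.1 (mem_range.1 hj)),
      show v + (j + m) = v + j + m by ring, show v + m + j = v + j + m by ring]
    rw [div_eq_iff (by positivity)] at h
    rw [h]
    field_simp
  simp_rw [laguerrePoly, sum_mul, mul_assoc, ← pow_add, map_sum, ← smul_eq_C_mul, map_smul,
    laguerreIntegral_X_pow, smul_eq_mul]
  rw [sum_congr rfl hterm, ← mul_sum, sum_neg_one_pow_mul_choose_mul_choose _ hm]
  split_ifs with h
  · subst h
    field_simp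
  · simp

lemma laguerreIntegral_laguerrePoly_mul {v k : ℕ} {p : ℝ[X]} (hp : p.natDegree ≤ k) :
    laguerreIntegral v (laguerrePoly v k * p) = (-1) ^ k * (v + k)! * p.coeff k := by
  nth_rw 1 [p.as_sum_range_C_mul_X_pow' (Nat.lt_succ_iff.2 hp)]
  simp_rw [mul_sum, map_sum, ← smul_eq_C_mul, mul_smul_comm, map_smul]
  rw [sum_eq_single_of_mem k (self_mem_range_succ k)]
  · rw [laguerreIntegral_laguerrePoly_mul_X_pow le_rfl, if_pos rfl, smul_eq_mul, mul_comm]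
  · intro m hm hmk
    rw [laguerreIntegral_laguerrePoly_mul_X_pow (by simpa [Nat.lt_succ_iff] using hm), if_neg hmk,
      smul_zero]

lemma laguerreIntegral_laguerrePoly_mul_laguerrePoly (v k m : ℕ) :
    laguerreIntegral v (laguerrePoly v k * laguerrePoly v m) =
      if k = m then ((v + k)! : ℝ) / k ! else 0 := by
  wlog h : m ≤ k generalizing k m
  · rw [mul_comm, this m k (by lia), if_neg (by lia), if_neg (by lia)]
  rw [laguerreIntegral_laguerrePoly_mul ((natDegree_laguerrePoly_le v m).trans h),
    coeff_laguerrePoly]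
  split_ifs with h₁ h₂ h₂
  · subst h₂
    have : (-1 : ℝ) ^ k * (-1) ^ k = 1 := by rw [← mul_pow]; simp
    rw [Nat.sub_self, Nat.choose_zero_right, Nat.cast_one]
    linear_combination ((v + k)! / k ! : ℝ) * this
  all_goals lia

lemma eq_zero_of_laguerreIntegral_laguerrePoly_mul_eq_zero {v N : ℕ} {p : ℝ[X]}
    (hp : p.degree < N) (h : ∀ k < N, laguerreIntegral v (laguerrePoly v k * p) = 0) : p = 0 := by
  by_contra hp0
  have := h p.natDegree ((natDegree_lt_iff_degree_lt hp0).2 hp)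
  rw [laguerreIntegral_laguerrePoly_mul le_rfl] at this
  simp [hp0, Nat.factorial_ne_zero] at this

lemma sum_laguerreIntegral_smul_laguerrePoly {v N : ℕ} {p : ℝ[X]} (hp : p.degree < N) :
    ∑ k ∈ range N, (k ! / (v + k)! * laguerreIntegral v (laguerrePoly v k * p)) • laguerrePoly v k
      = p := by
  refine (sub_eq_zero.1 <| eq_zero_of_laguerreIntegral_laguerrePoly_mul_eq_zero (v := v) (N := N)
    ?_ fun m hm => ?_).symm
  · rw [← mem_degreeLT] at hp ⊢
    refine sub_mem hp (sum_mem fun k hk => Submodule.smul_mem _ _ ?_)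
    rw [mem_degreeLT]
    exact (degree_le_of_natDegree_le (natDegree_laguerrePoly_le v k)).trans_lt
      (by exact_mod_cast mem_range.1 hk)
  · simp_rw [mul_sub, map_sub, mul_sum, map_sum, mul_smul_comm, map_smul,
      laguerreIntegral_laguerrePoly_mul_laguerrePoly]
    rw [sum_eq_single_of_mem m (mem_range.2 hm) fun k _ hk => by rw [if_neg hk.symm, smul_zero],
      if_pos rfl, smul_eq_mul]
    field_simp
    ring

lemma hasSum_pow_div_factorial_mul_choose (a : ℝ) (j : ℕ) :
    HasSum (fun n : ℕ => a ^ n / n ! * (n.choose j : ℝ)) (Real.exp a * (a ^ j / j !)) := by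
  have hexp : HasSum (fun n : ℕ => a ^ n / n !) (Real.exp a) := by
    rw [Real.exp_eq_exp_ℝ]
    exact NormedSpace.expSeries_div_hasSum_exp a
  rw [← hasSum_nat_add_iff' j, sum_eq_zero fun i hi => by
    rw [Nat.choose_eq_zero_of_lt (mem_range.1 hi), Nat.cast_zero, mul_zero], sub_zero]
  have hshift (n : ℕ) : a ^ (n + j) / (n + j)! * ((n + j).choose j : ℝ) =
      a ^ n / n ! * (a ^ j / j !) := by
    rw [← Nat.choose_symm_add, Nat.cast_add_choose, pow_add]
    field_simp
  simpa only [hshift] using hexp.mul_right (a ^ j / j !)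

lemma hasSum_pow_div_factorial_mul_factorial_div (v k : ℕ) (a : ℝ) :
    HasSum (fun n : ℕ => a ^ n / n ! * ((v + n + k)! / (v + n)!))
      (k ! * Real.exp a * laguerreL k v (-a)) := by
  have vandermonde (n : ℕ) : ((v + n + k).choose k : ℝ) =
      ∑ j ∈ range (k + 1), (n.choose j : ℝ) * (k + v).choose (k - j) := by
    rw [show v + n + k = n + (k + v) by ring, Nat.add_choose_eq,
      Finset.Nat.sum_antidiagonal_eq_sum_range_succ_mk]
    push_cast
    rfl
  have hterm (n : ℕ) : a ^ n / n ! * ((v + n + k)! / (v + n)!) =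
      k ! * ∑ j ∈ range (k + 1), a ^ n / n ! * n.choose j * (k + v).choose (k - j) := by
    rw [factorial_add_div_factorial, vandermonde, mul_left_comm, mul_sum]
    simp only [mul_assoc]
  have hval : k ! * Real.exp a * laguerreL k v (-a) =
      k ! * ∑ j ∈ range (k + 1), Real.exp a * (a ^ j / j !) * (k + v).choose (k - j) := by
    rw [laguerreL, mul_assoc, mul_sum]
    refine congrArg _ (sum_congr rfl fun j _ => ?_)
    have : (-1 : ℝ) ^ j * (-1) ^ j = 1 := by rw [← mul_pow]; norm_num
    rw [neg_pow a]
    linear_combination (Real.exp a * (k + v).choose (k - j) * a ^ j / j !) * this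
  simp only [hterm, hval]
  exact (hasSum_sum fun j _ =>
    (hasSum_pow_div_factorial_mul_choose a j).mul_right _).mul_left _

/- Half of the weight `exp (-u)` absorbs the factor `exp (u / 2)`, and any growth exponential in `k`
is harmless against the factorials in the Laguerre series of `PsiMu`. -/
lemma abs_laguerreL_le (v k : ℕ) {u : ℝ} (hu : 0 ≤ u) :
    |laguerreL k v u| ≤ 2 ^ v * 8 ^ k * Real.exp (u / 2) := by
  have hterm : ∀ j ∈ range (k + 1),
      |(-1 : ℝ) ^ j * (k + v).choose (k - j) * u ^ j / j !| ≤
        2 ^ (k + v) * (2 ^ k * Real.exp (u / 2)) := by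
    intro j hj
    have hchoose : ((k + v).choose (k - j) : ℝ) ≤ 2 ^ (k + v) := by
      exact_mod_cast Nat.choose_le_two_pow _ _
    have hexp : u ^ j / j ! ≤ 2 ^ k * Real.exp (u / 2) := calc
      u ^ j / j ! = 2 ^ j * ((u / 2) ^ j / j !) := by rw [div_pow]; field_simp
      _ ≤ 2 ^ k * Real.exp (u / 2) := mul_le_mul
        (pow_le_pow_right₀ one_le_two (Nat.lt_succ_iff.1 (mem_range.1 hj)))
        (Real.pow_div_factorial_le_exp _ (by positivity) _) (by positivity) (by positivity)
    rw [mul_div_assoc, abs_mul, abs_mul, abs_neg_one_pow, one_mul, Nat.abs_cast,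
      abs_of_nonneg (by positivity)]
    exact mul_le_mul hchoose hexp (by positivity) (by positivity)
  have hk : ((k + 1 : ℕ) : ℝ) ≤ 2 ^ k := by exact_mod_cast Nat.lt_two_pow_self
  calc |laguerreL k v u|
      ≤ (k + 1 : ℕ) * (2 ^ (k + v) * (2 ^ k * Real.exp (u / 2))) := by
        simpa [laguerreL] using (abs_sum_le_sum_abs _ _).trans (sum_le_card_nsmul _ _ _ hterm)
    _ ≤ 2 ^ k * (2 ^ (k + v) * (2 ^ k * Real.exp (u / 2))) := by gcongr
    _ = 2 ^ v * 8 ^ k * Real.exp (u / 2) := by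
        rw [show (8 : ℝ) = 2 * 2 * 2 by norm_num, mul_pow, mul_pow]
        ring

end Laguerre

section PsiSide

open Finset Polynomial
open scoped Nat

section SeriesIntegral

variable {α : Type*} [MeasurableSpace α] {P : Measure α} {F : ℕ → α → ℝ} {w : α → ℝ} {b : ℕ → ℝ}

lemma hasSum_tsum_of_norm_le_mul (hb : Summable b) (hF : ∀ k, ∀ᵐ s ∂P, ‖F k s‖ ≤ w s * b k) :
    ∀ᵐ s ∂P, HasSum (F · s) (∑' k, F k s) := by
  filter_upwards [ae_all_iff.2 hF] with s hs
  exact (Summable.of_norm_bounded (hb.mul_left (w s)) hs).hasSum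

lemma integrable_tsum_of_norm_le_mul (hFm : ∀ k, AEStronglyMeasurable (F k) P)
    (hw : Integrable w P) (hb : Summable b) (hF : ∀ k, ∀ᵐ s ∂P, ‖F k s‖ ≤ w s * b k) :
    Integrable (fun s => ∑' k, F k s) P := by
  refine (hw.mul_const (∑' k, b k)).mono' ?_ ?_
  · exact aestronglyMeasurable_of_tendsto_ae atTop
      (fun S => S.aestronglyMeasurable_fun_sum fun k _ => hFm k) (hasSum_tsum_of_norm_le_mul hb hF)
  · filter_upwards [ae_all_iff.2 hF] with s hs
    exact tsum_of_norm_bounded (hb.hasSum.mul_left (w s)) hs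

lemma hasSum_integral_of_norm_le_mul (hFm : ∀ k, AEStronglyMeasurable (F k) P)
    (hw : Integrable w P) (hb : Summable b) (hF : ∀ k, ∀ᵐ s ∂P, ‖F k s‖ ≤ w s * b k) :
    HasSum (fun k => ∫ s, F k s ∂P) (∫ s, ∑' k, F k s ∂P) := by
  refine hasSum_integral_of_dominated_convergence (fun k s => w s * b k) hFm hF
    (ae_of_all _ fun s => hb.mul_left (w s)) ?_ (hasSum_tsum_of_norm_le_mul hb hF)
  simpa only [tsum_mul_left] using hw.mul_const (∑' k, b k)

end SeriesIntegral

lemma abs_laguerreSeries_term_le {v k : ℕ} {c A B u : ℝ} (hc : |c| ≤ A * B ^ k) (hu : 0 < u)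
    (q : ℝ[X]) :
    |c / (v + k)! * (u ^ v * Real.exp (-u) * (laguerrePoly v k * q).eval u)| ≤
      |u ^ v * Real.exp (-(1 / 2 * u)) * q.eval u| * (A * 2 ^ v * ((8 * B) ^ k / k !)) := by
  have hck : |c / (v + k)!| ≤ A * B ^ k / k ! := by
    have hfac : (k ! : ℝ) ≤ (v + k)! := by
      exact_mod_cast Nat.factorial_le (Nat.le_add_left k v)
    rw [abs_div, Nat.abs_cast]
    gcongr
    exact (abs_nonneg _).trans hc
  have hexp : Real.exp (-u) * Real.exp (u / 2) = Real.exp (-(1 / 2 * u)) := by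
    rw [← Real.exp_add]
    ring_nf
  calc |c / (v + k)! * (u ^ v * Real.exp (-u) * (laguerrePoly v k * q).eval u)|
      = |c / (v + k)!| * (u ^ v * Real.exp (-u) * |laguerreL k v u| * |q.eval u|) := by
        simp only [eval_mul, eval_laguerrePoly, abs_mul, abs_pow, abs_of_pos hu, Real.abs_exp]
        ring
    _ ≤ A * B ^ k / k ! * (u ^ v * Real.exp (-u) * (2 ^ v * 8 ^ k * Real.exp (u / 2)) *
          |q.eval u|) := by
        gcongr
        exacts [(abs_nonneg _).trans hck, abs_laguerreL_le v k hu.le]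
    _ = |u ^ v * Real.exp (-(1 / 2 * u)) * q.eval u| * (A * 2 ^ v * ((8 * B) ^ k / k !)) := by
        simp only [abs_mul, abs_pow, abs_of_pos hu, Real.abs_exp, ← hexp, mul_pow]
        ring

lemma hasSum_laguerreIntegral_laguerreSeries (v : ℕ) {c : ℕ → ℝ} {A B : ℝ}
    (hc : ∀ k, |c k| ≤ A * B ^ k) (q : ℝ[X]) :
    HasSum (fun k => c k / (v + k)! * laguerreIntegral v (laguerrePoly v k * q))
      (∫ u in Set.Ioi (0 : ℝ),
        u ^ v * Real.exp (-u) * (∑' k, c k / (v + k)! * laguerreL k v u) * q.eval u) := by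
  set F : ℕ → ℝ → ℝ := fun k u =>
    c k / (v + k)! * (u ^ v * Real.exp (-u) * (laguerrePoly v k * q).eval u) with hFdef
  have hsum : HasSum (fun k => ∫ u in Set.Ioi (0 : ℝ), F k u)
      (∫ u in Set.Ioi (0 : ℝ), ∑' k, F k u) :=
    hasSum_integral_of_norm_le_mul (fun k => Measurable.aestronglyMeasurable (by fun_prop))
      (integrableOn_pow_mul_exp_neg_mul_mul_eval v one_half_pos q).abs
      ((Real.summable_pow_div_factorial (8 * B)).mul_left (A * 2 ^ v))
      fun k => ae_restrict_of_forall_mem measurableSet_Ioi fun u hu =>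
        abs_laguerreSeries_term_le (hc k) hu q
  convert hsum using 1
  · simp only [hFdef, integral_const_mul, laguerreIntegral_apply]
  · simp only [hFdef, eval_mul, eval_laguerrePoly, ← tsum_mul_left, ← tsum_mul_right]
    congr 1 with u
    exact tsum_congr fun k => by ring

lemma integral_laguerreSeries_mul_eval {v N : ℕ} {c : ℕ → ℝ} {A B : ℝ}
    (hc : ∀ k, |c k| ≤ A * B ^ k) {q : ℝ[X]} (hq : q.degree < N) :
    ∫ u in Set.Ioi (0 : ℝ),
        u ^ v * Real.exp (-u) * (∑' k, c k / (v + k)! * laguerreL k v u) * q.eval u =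
      ∑ k ∈ range N, c k / (v + k)! * laguerreIntegral v (laguerrePoly v k * q) := by
  refine (hasSum_laguerreIntegral_laguerreSeries v hc q).unique
    (hasSum_sum_of_ne_finset_zero fun k hk => ?_)
  have hqk : q.degree < k := hq.trans_le (by exact_mod_cast not_lt.1 (mt mem_range.2 hk))
  rw [laguerreIntegral_laguerrePoly_mul (natDegree_le_of_degree_le hqk.le),
    coeff_eq_zero_of_degree_lt hqk, mul_zero, mul_zero]

variable {r : ℕ} {μ ν : Fin r → ℕ}

/-- The product `∏ₗ Γ(μₗ + 1 + k) / Γ(νₗ + 1 + k)`. Up to normalisation it is the `k`-th Laguerre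
coefficient of `PsiMu`, and its inverse is the `(k + 1)`-st moment of `betaWeight`. -/
def gammaRatio (μ ν : Fin r → ℕ) (k : ℕ) : ℝ :=
  ∏ l, Real.Gamma ((μ l : ℝ) + 1 + k) / Real.Gamma ((ν l : ℝ) + 1 + k)

lemma gammaRatio_pos (μ ν : Fin r → ℕ) (k : ℕ) : 0 < gammaRatio μ ν k :=
  prod_pos fun l _ => div_pos (Real.Gamma_pos_of_pos (by positivity))
    (Real.Gamma_pos_of_pos (by positivity))

lemma gammaRatio_le (h : ∀ l, ν l ≤ μ l) (k : ℕ) :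
    gammaRatio μ ν k ≤ (∏ l, ((μ l - ν l)! * 2 ^ μ l : ℝ)) * (2 ^ r) ^ k := by
  calc gammaRatio μ ν k ≤ ∏ l, ((μ l - ν l)! * 2 ^ μ l : ℝ) * 2 ^ k := by
        refine prod_le_prod (fun l _ => by positivity) fun l _ => ?_
        have hchoose : ((μ l + k).choose (μ l - ν l) : ℝ) ≤ 2 ^ (μ l + k) := by
          exact_mod_cast Nat.choose_le_two_pow _ _
        have hratio := factorial_add_div_factorial (ν l + k) (μ l - ν l)
        rw [show ν l + k + (μ l - ν l) = μ l + k by have := h l; lia] at hratio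
        rw [Gamma_natCast_add_one_add, Gamma_natCast_add_one_add, hratio, mul_assoc, ← pow_add]
        gcongr
    _ = _ := by rw [prod_mul_distrib, prod_const, card_univ, Fintype.card_fin, pow_right_comm]

lemma PsiMu_eq_laguerreSeries (v : ℕ) (μ ν : Fin r → ℕ) (u x : ℝ) :
    PsiMu r v μ ν u x = ∑' k, x ^ k * gammaRatio μ ν k / (v + k)! * laguerreL k v u := by
  rw [PsiMu, ← tsum_mul_left]
  refine tsum_congr fun k => ?_
  rw [hyp1F1T_natCast_add_one, Real.Gamma_nat_eq_factorial, gammaRatio]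
  field_simp

lemma integral_PsiMu_mul_eval {v N : ℕ} (h : ∀ l, ν l ≤ μ l) (x : ℝ) {q : ℝ[X]}
    (hq : q.degree < N) :
    ∫ u in Set.Ioi (0 : ℝ), u ^ v * Real.exp (-u) * PsiMu r v μ ν u x * q.eval u =
      ∑ k ∈ range N, x ^ k *
        (gammaRatio μ ν k / (v + k)! * laguerreIntegral v (laguerrePoly v k * q)) := by
  have hc (k : ℕ) : |x ^ k * gammaRatio μ ν k| ≤
      (∏ l, ((μ l - ν l)! * 2 ^ μ l : ℝ)) * (|x| * 2 ^ r) ^ k := by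
    rw [abs_mul, abs_pow, abs_of_pos (gammaRatio_pos μ ν k), mul_pow, mul_left_comm]
    gcongr
    exact gammaRatio_le h k
  simp_rw [PsiMu_eq_laguerreSeries]
  rw [integral_laguerreSeries_mul_eval hc hq]
  exact sum_congr rfl fun k _ => by ring

end PsiSide

section PhiSide

open Finset
open scoped Nat

section MellinConvolution

variable {h : ℝ → ℝ} {i : ℕ} {T : ℝ}

lemma integrableOn_pow_mul_comp_div (hT : 0 < T)
    (hh : IntegrableOn (fun s => s ^ i * h s) (Set.Ioi 0)) :
    IntegrableOn (fun y => y ^ i * h (y / T)) (Set.Ioi 0) := by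
  have h₁ := (integrableOn_Ioi_comp_mul_left_iff (fun s => s ^ i * h s) 0 (inv_pos.2 hT)).2
    (by rwa [mul_zero])
  refine (h₁.const_mul (T ^ i)).congr (ae_of_all _ fun y => ?_)
  simp only [inv_mul_eq_div, div_pow]
  field_simp

lemma integral_pow_mul_comp_div (h : ℝ → ℝ) (i : ℕ) (hT : 0 < T) :
    ∫ y in Set.Ioi 0, y ^ i * h (y / T) = T ^ (i + 1) * ∫ s in Set.Ioi 0, s ^ i * h s := by
  have h₁ (y : ℝ) : y ^ i * h (y / T) = T ^ i * ((T⁻¹ * y) ^ i * h (T⁻¹ * y)) := by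
    rw [inv_mul_eq_div, div_pow]
    field_simp
  simp_rw [h₁]
  rw [integral_const_mul, integral_comp_mul_left_Ioi (fun s => s ^ i * h s) 0 (inv_pos.2 hT),
    mul_zero, inv_inv, smul_eq_mul, pow_succ, mul_assoc]

variable {α : Type*} [MeasurableSpace α] {P : Measure α} [SFinite P] {W τ : α → ℝ}

lemma integrable_prod_mul_comp_div (hW : Measurable W) (hτ : Measurable τ) (hh : Measurable h)
    (hτ₀ : ∀ᵐ t ∂P, 0 < τ t) (hWτ : Integrable (fun t => W t * τ t ^ (i + 1)) P)
    (hi : IntegrableOn (fun s => s ^ i * h s) (Set.Ioi 0)) :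
    Integrable (fun p : ℝ × α => W p.2 * (p.1 ^ i * h (p.1 / τ p.2)))
      ((volume.restrict (Set.Ioi 0)).prod P) := by
  rw [integrable_prod_iff' (Measurable.aestronglyMeasurable (by fun_prop))]
  constructor
  · filter_upwards [hτ₀] with t ht
    exact (integrableOn_pow_mul_comp_div ht hi).const_mul (W t)
  · refine (hWτ.norm.mul_const (∫ s in Set.Ioi 0, s ^ i * |h s|)).congr ?_
    filter_upwards [hτ₀] with t ht
    have hnorm : ∀ y ∈ Set.Ioi (0 : ℝ),
        ‖W t * (y ^ i * h (y / τ t))‖ = |W t| * (y ^ i * |h (y / τ t)|) := fun y hy => by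
      rw [Real.norm_eq_abs, abs_mul, abs_mul, abs_pow, abs_of_pos (Set.mem_Ioi.1 hy)]
    rw [setIntegral_congr_fun measurableSet_Ioi hnorm, integral_const_mul,
      integral_pow_mul_comp_div (fun s => |h s|) i ht, Real.norm_eq_abs, abs_mul, abs_pow,
      abs_of_pos ht, mul_assoc]

lemma integral_pow_mul_integral_mul_comp_div (hW : Measurable W) (hτ : Measurable τ)
    (hh : Measurable h) (hτ₀ : ∀ᵐ t ∂P, 0 < τ t) (hWτ : Integrable (fun t => W t * τ t ^ (i + 1)) P)
    (hi : IntegrableOn (fun s => s ^ i * h s) (Set.Ioi 0)) :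
    ∫ y in Set.Ioi 0, y ^ i * ∫ t, W t * h (y / τ t) ∂P =
      (∫ t, W t * τ t ^ (i + 1) ∂P) * ∫ s in Set.Ioi 0, s ^ i * h s := by
  calc ∫ y in Set.Ioi 0, y ^ i * ∫ t, W t * h (y / τ t) ∂P
      = ∫ y in Set.Ioi 0, ∫ t, W t * (y ^ i * h (y / τ t)) ∂P := by
        simp only [← integral_const_mul, mul_left_comm]
    _ = ∫ t, (∫ y in Set.Ioi 0, W t * (y ^ i * h (y / τ t))) ∂P :=
        integral_integral_swap (integrable_prod_mul_comp_div hW hτ hh hτ₀ hWτ hi)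
    _ = ∫ t, W t * τ t ^ (i + 1) * (∫ s in Set.Ioi 0, s ^ i * h s) ∂P := by
        refine integral_congr_ae ?_
        filter_upwards [hτ₀] with t ht
        rw [integral_const_mul, integral_pow_mul_comp_div h i ht, mul_assoc]
    _ = _ := integral_mul_const _ _

end MellinConvolution

section UnitCube

variable {r : ℕ}

lemma integral_rpow_mul_one_sub_rpow {α β : ℝ} (hα : 0 < α) (hβ : 0 < β) :
    ∫ x in Set.Ioo (0 : ℝ) 1, x ^ (α - 1) * (1 - x) ^ (β - 1) =
      Real.Gamma α * Real.Gamma β / Real.Gamma (α + β) := by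
  set f : ℝ → ℝ := fun x => x ^ (α - 1) * (1 - x) ^ (β - 1)
  have hbeta := ProbabilityTheory.beta_pos hα hβ
  have hnonneg : 0 ≤ᵐ[volume.restrict (Set.Ioo 0 1)]
      fun x => 1 / ProbabilityTheory.beta α β * f x :=
    ae_restrict_of_forall_mem measurableSet_Ioo fun x hx => mul_nonneg (by positivity)
      (mul_nonneg (Real.rpow_nonneg hx.1.le _) (Real.rpow_nonneg (sub_nonneg.2 hx.2.le) _))
  have hpdf : ∫ x in Set.Ioo 0 1, 1 / ProbabilityTheory.beta α β * f x = 1 := by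
    have h := ProbabilityTheory.lintegral_betaPDF_eq_one hα hβ
    simp only [ProbabilityTheory.lintegral_betaPDF, mul_assoc] at h
    rw [integral_eq_lintegral_of_nonneg_ae hnonneg (by fun_prop), h, ENNReal.toReal_one]
  rwa [integral_const_mul, one_div_mul_eq_div, div_eq_one_iff_eq hbeta.ne'] at hpdf

lemma unitCube_eq_pi (r : ℕ) : unitCube r = Set.univ.pi fun _ => Set.Ioo 0 1 := by
  ext t
  simp [unitCube]

lemma measurableSet_unitCube (r : ℕ) : MeasurableSet (unitCube r) := by
  rw [unitCube_eq_pi]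
  exact MeasurableSet.univ_pi fun _ => measurableSet_Ioo

lemma restrict_unitCube (r : ℕ) : (volume : Measure (Fin r → ℝ)).restrict (unitCube r) =
    Measure.pi fun _ => volume.restrict (Set.Ioo 0 1) := by
  rw [unitCube_eq_pi, volume_pi, Measure.restrict_pi_pi]

lemma setIntegral_unitCube_prod_rpow_mul_pow {α β : Fin r → ℝ} {m : ℕ} (hα : ∀ l, 0 < α l + m)
    (hβ : ∀ l, 0 < β l) :
    ∫ t in unitCube r, (∏ l, t l ^ (α l - 1) * (1 - t l) ^ (β l - 1)) * (∏ l, t l) ^ m =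
      ∏ l, Real.Gamma (α l + m) * Real.Gamma (β l) / Real.Gamma (α l + m + β l) := by
  have hprod : Set.EqOn
      (fun t => (∏ l, t l ^ (α l - 1) * (1 - t l) ^ (β l - 1)) * (∏ l, t l) ^ m)
      (fun t => ∏ l, t l ^ (α l + m - 1) * (1 - t l) ^ (β l - 1)) (unitCube r) := by
    intro t ht
    simp only [← prod_pow, ← prod_mul_distrib]
    refine prod_congr rfl fun l _ => ?_
    rw [add_sub_right_comm, Real.rpow_add (ht l).1, Real.rpow_natCast]
    ring
  rw [setIntegral_congr_fun (measurableSet_unitCube r) hprod, restrict_unitCube,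
    integral_fintype_prod_eq_prod fun l x => x ^ (α l + m - 1) * (1 - x) ^ (β l - 1)]
  exact prod_congr rfl fun l _ => integral_rpow_mul_one_sub_rpow (hα l) (hβ l)

end UnitCube

/-- The weight `s ^ v * exp (-s) * ₀F₁(v + 1; a s)`. For `a ≥ 0` it is proportional to the density
of the squared norm of a shifted standard complex Gaussian vector in dimension `v + 1`; `PhiMuR` at
`-a` is its multiplicative convolution with beta densities. -/
def noncentralGammaWeight (v : ℕ) (a s : ℝ) : ℝ :=
  s ^ v * Real.exp (-s) * hyp0F1R ((v : ℝ) + 1) (a * s)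

lemma measurable_noncentralGammaWeight (v : ℕ) (a : ℝ) :
    Measurable (noncentralGammaWeight v a) := by
  have : Measurable (hyp0F1R ((v : ℝ) + 1)) := Measurable.tsum fun k => by fun_prop
  unfold noncentralGammaWeight
  fun_prop

/-- The `k`-th term of the series of `s ^ i * noncentralGammaWeight v a s`. -/
def noncentralGammaTerm (v i : ℕ) (a : ℝ) (k : ℕ) (s : ℝ) : ℝ :=
  v ! * (a ^ k / (k ! * (v + k)!)) * (s ^ (v + k + i) * Real.exp (-s))

lemma pow_mul_noncentralGammaWeight (v i : ℕ) (a s : ℝ) :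
    s ^ i * noncentralGammaWeight v a s = ∑' k, noncentralGammaTerm v i a k s := by
  rw [noncentralGammaWeight, hyp0F1R, ← tsum_mul_left, ← tsum_mul_left]
  refine tsum_congr fun k => ?_
  rw [Gamma_natCast_add_one_add, Real.Gamma_nat_eq_factorial, noncentralGammaTerm, mul_pow, pow_add,
    pow_add]
  ring

lemma abs_noncentralGammaTerm_le (v i : ℕ) (a : ℝ) (k : ℕ) {s : ℝ} (hs : 0 < s) :
    |noncentralGammaTerm v i a k s| ≤
      s ^ (v + i) * Real.exp (-(1 / 2 * s)) * ((2 * |a|) ^ k / k !) := by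
  have hfac : (v ! * k ! : ℝ) ≤ (v + k)! := by
    exact_mod_cast Nat.le_of_dvd (Nat.factorial_pos _)
      (Nat.factorial_mul_factorial_dvd_factorial_add v k)
  have hpow : (s / 2) ^ k / k ! ≤ Real.exp (s / 2) :=
    Real.pow_div_factorial_le_exp _ (by positivity) _
  have hexp : Real.exp (-s) * Real.exp (s / 2) = Real.exp (-(1 / 2 * s)) := by
    rw [← Real.exp_add]
    ring_nf
  calc |noncentralGammaTerm v i a k s|
      = v ! / (v + k)! * (|a| ^ k / k ! * (s ^ (v + k + i) * Real.exp (-s))) := by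
        simp only [noncentralGammaTerm, abs_mul, abs_div, abs_pow, abs_of_pos hs, Real.abs_exp,
          Nat.abs_cast]
        ring
    _ ≤ 1 / k ! * (|a| ^ k / k ! * (s ^ (v + k + i) * Real.exp (-s))) := by
        gcongr ?_ * _
        rw [div_le_div_iff₀ (by positivity) (by positivity), one_mul]
        exact hfac
    _ = s ^ (v + i) * Real.exp (-s) * ((2 * |a|) ^ k / k !) * ((s / 2) ^ k / k !) := by
        rw [mul_pow, div_pow]
        field_simp
        ring
    _ ≤ s ^ (v + i) * Real.exp (-s) * ((2 * |a|) ^ k / k !) * Real.exp (s / 2) := by gcongr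
    _ = s ^ (v + i) * Real.exp (-(1 / 2 * s)) * ((2 * |a|) ^ k / k !) := by
        rw [← hexp]
        ring

variable (v i : ℕ) (a : ℝ)

lemma integrableOn_pow_mul_noncentralGammaWeight :
    IntegrableOn (fun s => s ^ i * noncentralGammaWeight v a s) (Set.Ioi 0) := by
  simp only [pow_mul_noncentralGammaWeight]
  exact integrable_tsum_of_norm_le_mul
    (fun k => Measurable.aestronglyMeasurable (by unfold noncentralGammaTerm; fun_prop))
    (integrableOn_pow_mul_exp_neg_mul (v + i) one_half_pos)
    (Real.summable_pow_div_factorial (2 * |a|)) fun k =>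
      ae_restrict_of_forall_mem measurableSet_Ioi fun s hs => abs_noncentralGammaTerm_le v i a k hs

lemma integral_pow_mul_noncentralGammaWeight :
    ∫ s in Set.Ioi 0, s ^ i * noncentralGammaWeight v a s =
      v ! * (i ! * Real.exp a * laguerreL i v (-a)) := by
  have hterm (k : ℕ) : ∫ s in Set.Ioi 0, noncentralGammaTerm v i a k s =
      v ! * (a ^ k / k ! * ((v + k + i)! / (v + k)!)) := by
    simp only [noncentralGammaTerm, integral_const_mul, integral_pow_mul_exp_neg]
    field_simp
  have hsum := hasSum_integral_of_norm_le_mul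
    (fun k => Measurable.aestronglyMeasurable (by unfold noncentralGammaTerm; fun_prop))
    (integrableOn_pow_mul_exp_neg_mul (v + i) one_half_pos)
    (Real.summable_pow_div_factorial (2 * |a|)) fun k =>
      ae_restrict_of_forall_mem measurableSet_Ioi fun s hs => abs_noncentralGammaTerm_le v i a k hs
  simp only [hterm, ← pow_mul_noncentralGammaWeight] at hsum
  exact hsum.unique ((hasSum_pow_div_factorial_mul_factorial_div v i a).mul_left _)

variable {r : ℕ} {μ ν : Fin r → ℕ}

/-- The product of the unnormalised beta densities `t ^ (ν - 1) * (1 - t) ^ (μ - ν - 1)` on the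
unit cube. -/
def betaWeight (μ ν : Fin r → ℕ) (t : Fin r → ℝ) : ℝ :=
  ∏ l, t l ^ ((ν l : ℝ) - 1) * (1 - t l) ^ ((μ l : ℝ) - ν l - 1)

lemma setIntegral_betaWeight_mul_prod_pow (h : ∀ l, ν l < μ l) (i : ℕ) :
    ∫ t in unitCube r, betaWeight μ ν t * (∏ l, t l) ^ (i + 1) =
      (∏ l, Real.Gamma ((μ l : ℝ) - ν l)) * (gammaRatio μ ν i)⁻¹ := by
  simp only [betaWeight]
  rw [setIntegral_unitCube_prod_rpow_mul_pow (fun l => by positivity)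
    fun l => sub_pos.2 (by exact_mod_cast h l), gammaRatio, ← prod_inv_distrib, ← prod_mul_distrib]
  refine prod_congr rfl fun l _ => ?_
  rw [show (ν l : ℝ) + (i + 1 : ℕ) + (μ l - ν l) = μ l + 1 + i by push_cast; ring,
    show (ν l : ℝ) + (i + 1 : ℕ) = ν l + 1 + i by push_cast; ring, inv_div]
  ring

lemma PhiMuR_neg (μ ν : Fin r → ℕ) (y : ℝ) :
    PhiMuR r v μ ν (-a) y = 1 / (v ! * ∏ l, Real.Gamma ((μ l : ℝ) - ν l)) *
      ∫ t in unitCube r, betaWeight μ ν t * noncentralGammaWeight v a (y / ∏ l, t l) := by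
  simp only [PhiMuR, betaWeight, noncentralGammaWeight, Real.Gamma_nat_eq_factorial, neg_mul,
    neg_neg, mul_assoc]

lemma prod_Gamma_sub_pos (h : ∀ l, ν l < μ l) : 0 < ∏ l, Real.Gamma ((μ l : ℝ) - ν l) :=
  prod_pos fun l _ => Real.Gamma_pos_of_pos (sub_pos.2 (by exact_mod_cast h l))

lemma integral_pow_mul_PhiMuR_neg (h : ∀ l, ν l < μ l) :
    ∫ x in Set.Ioi 0, x ^ i * PhiMuR r v μ ν (-a) x =
      (gammaRatio μ ν i)⁻¹ * (i ! * Real.exp a * laguerreL i v (-a)) := by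
  have hC := prod_Gamma_sub_pos h
  have hcube := setIntegral_betaWeight_mul_prod_pow h i
  have hcube_int :
      IntegrableOn (fun t => betaWeight μ ν t * (∏ l, t l) ^ (i + 1)) (unitCube r) := by
    refine Integrable.of_integral_ne_zero ?_
    have := gammaRatio_pos μ ν i
    rw [hcube]
    positivity
  have hpos : ∀ᵐ t ∂volume.restrict (unitCube r), 0 < ∏ l, t l :=
    ae_restrict_of_forall_mem (measurableSet_unitCube r) fun t ht => prod_pos fun l _ => (ht l).1
  have hmellin := integral_pow_mul_integral_mul_comp_div
    (by unfold betaWeight; fun_prop) (by fun_prop) (measurable_noncentralGammaWeight v a) hpos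
    hcube_int (integrableOn_pow_mul_noncentralGammaWeight v i a)
  calc ∫ x in Set.Ioi 0, x ^ i * PhiMuR r v μ ν (-a) x
      = 1 / (v ! * ∏ l, Real.Gamma ((μ l : ℝ) - ν l)) * ∫ y in Set.Ioi 0, y ^ i *
          ∫ t in unitCube r, betaWeight μ ν t * noncentralGammaWeight v a (y / ∏ l, t l) := by
        rw [← integral_const_mul]
        congr 1 with y
        rw [PhiMuR_neg, mul_left_comm]
    _ = (gammaRatio μ ν i)⁻¹ * (i ! * Real.exp a * laguerreL i v (-a)) := by
        rw [hmellin, hcube, integral_pow_mul_noncentralGammaWeight]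
        field_simp

end PhiSide

section DualBasis

open Finset Polynomial
open scoped Nat

variable {r N : ℕ} {μ ν : Fin r → ℕ} {a : Fin N → ℝ}

/-- The polynomial of degree less than `N` taking the value `exp (-a j)` at `-a j` and vanishing at
`-a l` for `l ≠ j`; the product over `l ≠ j` in the kernel is its value at `u`. -/
def expLagrangeBasis (a : Fin N → ℝ) (j : Fin N) : ℝ[X] :=
  C (Real.exp (-a j)) * Lagrange.basis univ (fun l => -a l) j

lemma eval_expLagrangeBasis (a : Fin N → ℝ) (j : Fin N) (u : ℝ) :
    (expLagrangeBasis a j).eval u =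
      Real.exp (-a j) * ∏ l ∈ univ.erase j, (-u - a l) / (a j - a l) := by
  rw [expLagrangeBasis, Lagrange.basis, eval_mul, eval_C, eval_prod]
  refine congrArg _ (prod_congr rfl fun l _ => ?_)
  simp only [Lagrange.basisDivisor, eval_mul, eval_C, eval_sub, eval_X]
  rw [← neg_div_neg_eq, div_eq_inv_mul]
  ring_nf

lemma exp_mul_eval_expLagrangeBasis_neg (ha : Function.Injective a) (j l : Fin N) :
    Real.exp (a l) * (expLagrangeBasis a j).eval (-a l) = if j = l then 1 else 0 := by
  have hinj : Function.Injective fun l => -a l := neg_injective.comp ha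
  rw [expLagrangeBasis, eval_mul, eval_C]
  split_ifs with h
  · subst h
    rw [Lagrange.eval_basis_self (v := fun l => -a l) hinj.injOn (mem_univ j), mul_one,
      ← Real.exp_add, add_neg_cancel, Real.exp_zero]
  · rw [Lagrange.eval_basis_of_ne (v := fun l => -a l) h (mem_univ l), mul_zero, mul_zero]

lemma degree_expLagrangeBasis_lt (ha : Function.Injective a) (j : Fin N) :
    (expLagrangeBasis a j).degree < N := by
  have hinj : Function.Injective fun l => -a l := neg_injective.comp ha
  rw [expLagrangeBasis, degree_C_mul (Real.exp_pos _).ne',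
    Lagrange.degree_basis hinj.injOn (mem_univ j), card_univ, Fintype.card_fin]
  exact_mod_cast Nat.sub_lt (Nat.zero_lt_of_lt j.isLt) one_pos

/-- The coefficients of the polynomials dual to `(∏ₗ Γ(μₗ - νₗ)) * PhiMuR r v μ ν (-a j)` under
integration over `(0, ∞)`: row `j` lists the coefficients of the `j`-th dual polynomial. -/
def dualCoeff (v : ℕ) (μ ν : Fin r → ℕ) (a : Fin N → ℝ) : Matrix (Fin N) (Fin N) ℝ :=
  Matrix.of fun j k => (∏ l, Real.Gamma ((μ l : ℝ) - ν l))⁻¹ *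
    (gammaRatio μ ν k / (v + k)! * laguerreIntegral v (laguerrePoly v k * expLagrangeBasis a j))

lemma dualCoeff_mul_moments (v : ℕ) (h : ∀ l, ν l < μ l) (ha : Function.Injective a) :
    dualCoeff v μ ν a * Matrix.of (fun i j : Fin N => ∫ x in Set.Ioi (0 : ℝ), x ^ (i : ℕ) *
      ((∏ l, Real.Gamma ((μ l : ℝ) - ν l)) * PhiMuR r v μ ν (-(a j)) x)) = 1 := by
  ext j l
  have hC := (prod_Gamma_sub_pos h).ne'
  have hexpand := congrArg (fun p : ℝ[X] => Real.exp (a l) * p.eval (-a l))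
    (sum_laguerreIntegral_smul_laguerrePoly (v := v) (degree_expLagrangeBasis_lt ha j))
  simp only [exp_mul_eval_expLagrangeBasis_neg ha, eval_finsetSum, eval_smul, eval_laguerrePoly,
    smul_eq_mul, sum_range] at hexpand
  rw [Matrix.mul_apply, Matrix.one_apply, ← hexpand, mul_sum]
  refine sum_congr rfl fun k _ => ?_
  have hc := (gammaRatio_pos μ ν k).ne'
  simp only [dualCoeff, Matrix.of_apply, mul_left_comm (_ ^ _) (∏ _, _), integral_const_mul,
    integral_pow_mul_PhiMuR_neg v k (a l) h]
  field_simp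

lemma integral_PsiMu_mul_sum_PhiMuR (v : ℕ) (h : ∀ l, ν l < μ l) (ha : Function.Injective a)
    (x y : ℝ) :
    ∫ u in Set.Ioi (0 : ℝ), u ^ v * Real.exp (-u) * PsiMu r v μ ν u x *
        ∑ j, PhiMuR r v μ ν (-(a j)) y * Real.exp (-(a j)) *
          ∏ l ∈ univ.erase j, (-u - a l) / (a j - a l) =
      ∑ k : Fin N, ∑ j, x ^ (k : ℕ) * dualCoeff v μ ν a j k *
        ((∏ l, Real.Gamma ((μ l : ℝ) - ν l)) * PhiMuR r v μ ν (-(a j)) y) := by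
  have hC := (prod_Gamma_sub_pos h).ne'
  set q : ℝ[X] := ∑ j, PhiMuR r v μ ν (-(a j)) y • expLagrangeBasis a j with hq
  have hdeg : q.degree < N := by
    rw [← mem_degreeLT]
    exact sum_mem fun j _ =>
      Submodule.smul_mem _ _ (mem_degreeLT.2 (degree_expLagrangeBasis_lt ha j))
  have heval (u : ℝ) : ∑ j, PhiMuR r v μ ν (-(a j)) y * Real.exp (-(a j)) *
      ∏ l ∈ univ.erase j, (-u - a l) / (a j - a l) = q.eval u := by
    simp only [hq, eval_finsetSum, eval_smul, eval_expLagrangeBasis, smul_eq_mul, mul_assoc]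
  simp only [heval]
  rw [integral_PsiMu_mul_eval (fun l => (h l).le) x hdeg, sum_range]
  refine sum_congr rfl fun k _ => ?_
  rw [hq, mul_sum, map_sum, mul_sum, mul_sum]
  refine sum_congr rfl fun j _ => ?_
  rw [mul_smul_comm, map_smul, smul_eq_mul, dualCoeff, Matrix.of_apply]
  field_simp

lemma inv_det_mul_det_mul_det {n R : Type*} [Fintype n] [DecidableEq n] [Field R]
    {Q G : Matrix n n R} (h : Q * G = 1) (V X : Matrix n n R) :
    G.det⁻¹ * V.det * X.det = (V.transpose * Q.transpose * X).det := by
  have hdet : Q.det = G.det⁻¹ :=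
    eq_inv_of_mul_eq_one_left (by rw [← Matrix.det_mul, h, Matrix.det_one])
  rw [Matrix.det_mul, Matrix.det_mul, Matrix.det_transpose, Matrix.det_transpose, hdet]
  ring

end DualBasis

theorem prop_4_1_general (r ν0 N : ℕ) (μ ν : Fin r → ℕ) (hμν : ∀ l, ν l < μ l)
    (a : Fin N → ℝ) (hdist : Function.Injective a)
    (g : Matrix (Fin N) (Fin N) ℝ)
    (hg : ∀ i j, g i j = ∫ x in Set.Ioi (0 : ℝ),
      x ^ (i : ℕ) * ((∏ l, Real.Gamma ((μ l : ℝ) - (ν l : ℝ))) *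
        PhiMuR r ν0 μ ν (-(a j)) x))
    (Z : ℝ) (hZ : Z = (Nat.factorial N : ℝ) * g.det)
    (K : ℝ → ℝ → ℝ)
    (hK : ∀ x y : ℝ, 0 < x → 0 < y → K x y = ∫ u in Set.Ioi (0 : ℝ),
      u ^ ν0 * Real.exp (-u) * PsiMu r ν0 μ ν u x *
        ∑ j, PhiMuR r ν0 μ ν (-(a j)) y * Real.exp (-(a j)) *
          ∏ l ∈ Finset.univ.erase j, (-u - a l) / (a j - a l))
    (x : Fin N → ℝ) (hx : ∀ i, 0 < x i) :
    (1 / Z) * (Matrix.of fun i j : Fin N => x j ^ (i : ℕ)).det *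
        (Matrix.of fun i j : Fin N =>
          (∏ l, Real.Gamma ((μ l : ℝ) - (ν l : ℝ))) *
            PhiMuR r ν0 μ ν (-(a i)) (x j)).det =
      (1 / (Nat.factorial N : ℝ)) * (Matrix.of fun i j : Fin N => K (x i) (x j)).det := by
  set V : Matrix (Fin N) (Fin N) ℝ := Matrix.of fun i j => x j ^ (i : ℕ) with hV
  set X : Matrix (Fin N) (Fin N) ℝ := Matrix.of fun i j =>
    (∏ l, Real.Gamma ((μ l : ℝ) - (ν l : ℝ))) * PhiMuR r ν0 μ ν (-(a i)) (x j) with hX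
  have hdual : dualCoeff ν0 μ ν a * g = 1 := by
    rw [← dualCoeff_mul_moments ν0 hμν hdist]
    exact congrArg _ (Matrix.ext hg)
  have hkernel : (Matrix.of fun i j => K (x i) (x j)) =
      V.transpose * (dualCoeff ν0 μ ν a).transpose * X := by
    ext i j
    rw [Matrix.of_apply, hK _ _ (hx i) (hx j), integral_PsiMu_mul_sum_PhiMuR ν0 hμν hdist,
      Finset.sum_comm]
    simp only [Matrix.mul_apply, Matrix.transpose_apply, Finset.sum_mul, hV, hX, Matrix.of_apply]
  rw [hkernel, ← inv_det_mul_det_mul_det hdual, hZ]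
  field_simp

/-- **Proposition 4.1** (correlation-kernel form of the eigenvalue density for the
product of truncated unitary matrices and a shifted Ginibre matrix, residue form). -/
theorem prop_4_1 (r ν0 N : ℕ) (hr : 1 ≤ r) (μ ν : Fin r → ℕ) (hμν : ∀ l, ν l < μ l)
    (a : Fin N → ℝ) (ha : ∀ j, 0 < a j) (hdist : Function.Injective a)
    (g : Matrix (Fin N) (Fin N) ℝ)
    (hg : ∀ i j, g i j = ∫ x in Set.Ioi (0 : ℝ),
      x ^ (i : ℕ) * ((∏ l, Real.Gamma ((μ l : ℝ) - (ν l : ℝ))) *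
        PhiMuR r ν0 μ ν (-(a j)) x))
    (hdet : g.det ≠ 0)
    (Z : ℝ) (hZ : Z = (Nat.factorial N : ℝ) * g.det)
    (K : ℝ → ℝ → ℝ)
    (hK : ∀ x y : ℝ, K x y = ∫ u in Set.Ioi (0 : ℝ),
      u ^ ν0 * Real.exp (-u) * PsiMu r ν0 μ ν u x *
        ∑ j, PhiMuR r ν0 μ ν (-(a j)) y * Real.exp (-(a j)) *
          ∏ l ∈ Finset.univ.erase j, (-u - a l) / (a j - a l))
    (x : Fin N → ℝ) (hx : ∀ i, 0 < x i) :
    (1 / Z) * (Matrix.of fun i j : Fin N => x j ^ (i : ℕ)).det *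
        (Matrix.of fun i j : Fin N =>
          (∏ l, Real.Gamma ((μ l : ℝ) - (ν l : ℝ))) *
            PhiMuR r ν0 μ ν (-(a i)) (x j)).det =
      (1 / (Nat.factorial N : ℝ)) * (Matrix.of fun i j : Fin N => K (x i) (x j)).det :=
  prop_4_1_general r ν0 N μ ν hμν a hdist g hg Z hZ K (fun x y _ _ => hK x y) x hx

end
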